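/- Explicit corrector and the Taylor diffusion formula for a shear flow: let κ, a, ε > 0 and define the matrix field 𝐚(y) := κ I₂ + a ε² sin(2π y₂) I₂^⊥ on ℝ², the functions χ₁(y) := (a ε² / (2π κ)) cos(2π y₂) and χ₂ := 0. Then: (i) χ₁, χ₂ are ℤ²-periodic with zero mean over [0,1]², and for i = 1, 2 they solve the (steady) cell problem div( 𝐚(y) (e_i + ∇χ_i(y)) ) = 0 for all y ∈ ℝ²; (ii) the homogenized matrix 𝐚̄, defined by 𝐚̄ e_i := ∫_{[0,1]²} 𝐚(y)(e_i + ∇χ_i(y)) dy, is given by the Taylor diffusion formula 𝐚̄ e₁ = (κ + a²ε⁴/(2κ)) e₁ and 𝐚̄ e₂ = κ e₂; i.e., 𝐚̄ is the diagonal matrix diag(κ + a²ε⁴/(2κ), κ). -/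

import Mathlib

open MeasureTheory Real Topology Filter

noncomputable section

/-- Spatial partial derivative `∂_i f` (via the Fréchet derivative). -/
def pd {d : ℕ} (f : (Fin d → ℝ) → ℝ) (i : Fin d) (x : Fin d → ℝ) : ℝ :=
  fderiv ℝ f x (Pi.single i 1)

/-- The unit box `[0,1]^d`, a fundamental domain for the torus `T^d = ℝ^d/ℤ^d`. -/
def box (d : ℕ) : Set (Fin d → ℝ) := Set.Icc 0 1

/-- `ℤ^d`-periodicity in the space variable (functions on the torus `T^d`). -/
def SpacePeriodic {d : ℕ} (f : (Fin d → ℝ) → ℝ) : Prop :=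
  ∀ (x : Fin d → ℝ) (k : Fin d → ℤ), f (x + fun i => (k i : ℝ)) = f x

/-- Squared length of the spatial gradient, `|∇f|²(x)`. -/
def gradSq {d : ℕ} (f : (Fin d → ℝ) → ℝ) (x : Fin d → ℝ) : ℝ :=
  ∑ i, (pd f i x) ^ 2

/-- Squared `L²(T^d)` norm. -/
def l2sq {d : ℕ} (f : (Fin d → ℝ) → ℝ) : ℝ := ∫ x in box d, (f x) ^ 2

/-- The dissipation `∫_0^t ‖∇θ(s,·)‖²_{L²(T^d)} ds`. -/
def dissipUpTo {d : ℕ} (θ : ℝ → (Fin d → ℝ) → ℝ) (t : ℝ) : ℝ :=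
  ∫ s in Set.Icc (0:ℝ) t, ∫ x in box d, gradSq (θ s) x

/-- The dissipation `∫_0^1 ∫_{T^d} |∇θ|² dx dt`. -/
def dissip {d : ℕ} (θ : ℝ → (Fin d → ℝ) → ℝ) : ℝ := dissipUpTo θ 1

/-- The 2×2 rotation matrix `I₂^⊥`. -/
def Iperp : Fin 2 → Fin 2 → ℝ := fun i j =>
  if i = 1 ∧ j = 0 then 1 else if i = 0 ∧ j = 1 then -1 else 0

/-- The matrix field `𝐚(y) = κI₂ + aε² sin(2πy₂) I₂^⊥` of the shear flow. -/
def aShear (κ a ε : ℝ) (y : Fin 2 → ℝ) (i j : Fin 2) : ℝ :=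
  κ * (if i = j then 1 else 0) + a * ε ^ 2 * Real.sin (2 * π * y 1) * Iperp i j

/-- The correctors `χ₁(y) = (aε²/(2πκ)) cos(2πy₂)`, `χ₂ = 0` of the shear flow. -/
def chiShear (κ a ε : ℝ) : Fin 2 → (Fin 2 → ℝ) → ℝ := fun i y =>
  if i = 0 then a * ε ^ 2 / (2 * π * κ) * Real.cos (2 * π * y 1) else 0

/-!
All fields involved depend on `y₂` only. For a profile `h` and `𝐚 = κI₂ + h(y₂) I₂^⊥`, a corrector
`χ₁ = X(y₂)` with `X' = -h/κ` cancels the second component of the flux `𝐚(e₁ + ∇χ₁)`, leaving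
`(κ + h²/κ) e₁`; with `χ₂ = 0` the flux `𝐚 e₂` is `-h e₁ + κ e₂`. Both are sums of a field
`u(y₂) e₁` and a constant, hence divergence free, and averaging them turns the Taylor enhancement
into the mean of `h²/κ`.
-/

section OneCoordinate

variable {d : ℕ} {j : Fin d}

theorem pd_comp_eval {g : ℝ → ℝ} {g' : ℝ} {x : Fin d → ℝ} (hg : HasDerivAt g g' (x j))
    (i : Fin d) : pd (fun z => g (z j)) i x = if i = j then g' else 0 := by
  have hcomp : HasFDerivAt (fun z : Fin d → ℝ => g (z j)) (g' • ContinuousLinearMap.proj j) x :=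
    hg.comp_hasFDerivAt x (hasFDerivAt_apply (𝕜 := ℝ) j x)
  simp [pd, hcomp.fderiv, Pi.single_apply, eq_comm]

theorem pd_const (c : ℝ) (i : Fin d) (x : Fin d → ℝ) : pd (fun _ => c) i x = 0 := by
  simp [pd]

theorem spacePeriodic_comp_eval {g : ℝ → ℝ} (hg : Function.Periodic g 1) (j : Fin d) :
    SpacePeriodic fun y : Fin d → ℝ => g (y j) := fun x k => by
  simpa using hg.int_mul (k j) (x j)

theorem volume_restrict_box (d : ℕ) :
    volume.restrict (box d) = Measure.pi fun _ : Fin d => volume.restrict (Set.Icc (0 : ℝ) 1) := by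
  rw [← Measure.restrict_pi_pi, Set.pi_univ_Icc, ← volume_pi]
  rfl

theorem setIntegral_box_comp_eval {E : Type*} [NormedAddCommGroup E] [NormedSpace ℝ E] {g : ℝ → E}
    (hg : AEStronglyMeasurable g (volume.restrict (Set.Icc 0 1))) (j : Fin d) :
    ∫ y in box d, g (y j) = ∫ t in (0 : ℝ)..1, g t := by
  let ν : Measure ℝ := volume.restrict (Set.Icc 0 1)
  have : IsProbabilityMeasure ν := ⟨by simp [ν]⟩
  have hmp := measurePreserving_eval (fun _ : Fin d => ν) j
  calc ∫ y in box d, g (y j)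
    _ = ∫ y, g (y j) ∂Measure.pi fun _ : Fin d => ν := by rw [volume_restrict_box]
    _ = ∫ t, g t ∂(Measure.pi fun _ : Fin d => ν).map (Function.eval j) :=
      (integral_map hmp.aemeasurable (hmp.map_eq.symm ▸ hg)).symm
    _ = ∫ t in Set.Icc 0 1, g t := by rw [hmp.map_eq]
    _ = ∫ t in (0 : ℝ)..1, g t := by
      rw [intervalIntegral.integral_of_le zero_le_one, integral_Icc_eq_integral_Ioc]

end OneCoordinate

section CellProblem

variable {d : ℕ}

/-- The divergence of a vector field on `ℝ^d`. -/
def divergence (v : (Fin d → ℝ) → Fin d → ℝ) (y : Fin d → ℝ) : ℝ :=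
  ∑ k, pd (fun z => v z k) k y

/-- The flux `𝐚(e_i + ∇χ)` of the cell problem in direction `e_i`, which reads
`divergence (cellFlux 𝐚 χ i) = 0`. -/
def cellFlux (A : (Fin d → ℝ) → Fin d → Fin d → ℝ) (χ : (Fin d → ℝ) → ℝ) (i : Fin d)
    (y : Fin d → ℝ) (k : Fin d) : ℝ :=
  ∑ j, A y k j * ((if j = i then 1 else 0) + pd χ j y)

/-- The column `𝐚̄ e_i` of the homogenized matrix, when `χ` is the corrector in direction `e_i`. -/
def homogenizedColumn (A : (Fin d → ℝ) → Fin d → Fin d → ℝ) (χ : (Fin d → ℝ) → ℝ) (i : Fin d)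
    (k : Fin d) : ℝ :=
  ∫ y in box d, cellFlux A χ i y k

end CellProblem

section Shear

/-- The matrix field `κI₂ + h(y₂) I₂^⊥` of the shear flow with stream function `h(y₂)`. -/
def shearMatrix (κ : ℝ) (h : ℝ → ℝ) (y : Fin 2 → ℝ) (i j : Fin 2) : ℝ :=
  κ * (if i = j then 1 else 0) + h (y 1) * Iperp i j

variable {κ : ℝ} {h X : ℝ → ℝ} {y : Fin 2 → ℝ}

theorem divergence_shear_add_const {u : ℝ → ℝ} (hu : DifferentiableAt ℝ u (y 1)) (c : ℝ) :
    divergence (fun z : Fin 2 → ℝ => ![u (z 1), c]) y = 0 := by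
  simp [divergence, pd_const, pd_comp_eval hu.hasDerivAt]

theorem cellFlux_shearMatrix_zero (hκ : κ ≠ 0) (hX : HasDerivAt X (-(h (y 1) / κ)) (y 1)) :
    cellFlux (shearMatrix κ h) (fun z => X (z 1)) 0 y = ![κ + h (y 1) ^ 2 / κ, 0] := by
  ext k
  fin_cases k
  · calc cellFlux (shearMatrix κ h) (fun z => X (z 1)) 0 y 0
      _ = κ + -h (y 1) * -(h (y 1) / κ) := by
        simp [cellFlux, shearMatrix, Iperp, pd_comp_eval hX]
      _ = κ + h (y 1) ^ 2 / κ := by ring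
  · calc cellFlux (shearMatrix κ h) (fun z => X (z 1)) 0 y 1
      _ = h (y 1) + κ * -(h (y 1) / κ) := by
        simp [cellFlux, shearMatrix, Iperp, pd_comp_eval hX]
      _ = 0 := by field_simp; ring

theorem cellFlux_shearMatrix_one (κ : ℝ) (h : ℝ → ℝ) (y : Fin 2 → ℝ) :
    cellFlux (shearMatrix κ h) (fun _ => 0) 1 y = ![-h (y 1), κ] := by
  ext k
  fin_cases k <;> simp [cellFlux, shearMatrix, Iperp, pd_const]

theorem divergence_cellFlux_shearMatrix_zero (hκ : κ ≠ 0)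
    (hX : ∀ t, HasDerivAt X (-(h t / κ)) t) (hh : DifferentiableAt ℝ h (y 1)) :
    divergence (cellFlux (shearMatrix κ h) (fun z => X (z 1)) 0) y = 0 := by
  have hflux : cellFlux (shearMatrix κ h) (fun z => X (z 1)) 0 =
      fun z => ![κ + h (z 1) ^ 2 / κ, 0] :=
    funext fun z => cellFlux_shearMatrix_zero hκ (hX (z 1))
  rw [hflux]
  exact divergence_shear_add_const (u := fun t => κ + h t ^ 2 / κ) (by fun_prop) 0

theorem divergence_cellFlux_shearMatrix_one (κ : ℝ) (hh : DifferentiableAt ℝ h (y 1)) :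
    divergence (cellFlux (shearMatrix κ h) (fun _ => 0) 1) y = 0 := by
  rw [funext (cellFlux_shearMatrix_one κ h)]
  exact divergence_shear_add_const (u := fun t => -h t) hh.neg κ

theorem homogenizedColumn_shearMatrix_zero (hκ : κ ≠ 0)
    (hX : ∀ t, HasDerivAt X (-(h t / κ)) t)
    (hh : IntegrableOn (fun t => h t ^ 2) (Set.Icc 0 1)) :
    homogenizedColumn (shearMatrix κ h) (fun z => X (z 1)) 0 =
      ![κ + (∫ t in (0 : ℝ)..1, h t ^ 2) / κ, 0] := by
  have hflux (z : Fin 2 → ℝ) := cellFlux_shearMatrix_zero hκ (hX (z 1))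
  have hmeas : AEStronglyMeasurable (fun t => κ + h t ^ 2 / κ) (volume.restrict (Set.Icc 0 1)) :=
    (hh.div_const κ).aestronglyMeasurable.const_add κ
  have hint : IntervalIntegrable (fun t => h t ^ 2 / κ) volume 0 1 :=
    (intervalIntegrable_iff_integrableOn_Icc_of_le zero_le_one).2 (hh.div_const κ)
  ext k
  fin_cases k
  · calc ∫ z in box 2, cellFlux (shearMatrix κ h) (fun z => X (z 1)) 0 z 0
      _ = ∫ z in box 2, (κ + h (z 1) ^ 2 / κ) := by simp [hflux]
      _ = ∫ t in (0 : ℝ)..1, (κ + h t ^ 2 / κ) := setIntegral_box_comp_eval hmeas 1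
      _ = κ + (∫ t in (0 : ℝ)..1, h t ^ 2) / κ := by
        rw [intervalIntegral.integral_add intervalIntegrable_const hint]
        simp
  · simp [homogenizedColumn, hflux]

theorem homogenizedColumn_shearMatrix_one (κ : ℝ)
    (hh : AEStronglyMeasurable h (volume.restrict (Set.Icc 0 1))) :
    homogenizedColumn (shearMatrix κ h) (fun _ => 0) 1 = ![-∫ t in (0 : ℝ)..1, h t, κ] := by
  ext k
  fin_cases k
  · simp [homogenizedColumn, cellFlux_shearMatrix_one, integral_neg, setIntegral_box_comp_eval hh]
  · simp [homogenizedColumn, cellFlux_shearMatrix_one, box, measureReal_def, Real.volume_Icc_pi]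

end Shear

section SinusoidalShear

/-- The stream function profile `aε² sin(2πt)` of the shear flow behind `aShear`. -/
def streamProfile (a ε t : ℝ) : ℝ := a * ε ^ 2 * Real.sin (2 * π * t)

/-- The profile `(aε²/(2πκ)) cos(2πt)` of the first corrector of `chiShear`. -/
def correctorProfile (κ a ε t : ℝ) : ℝ := a * ε ^ 2 / (2 * π * κ) * Real.cos (2 * π * t)

theorem aShear_eq_shearMatrix (κ a ε : ℝ) : aShear κ a ε = shearMatrix κ (streamProfile a ε) :=
  rfl

theorem chiShear_zero (κ a ε : ℝ) :
    chiShear κ a ε 0 = fun y => correctorProfile κ a ε (y 1) :=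
  rfl

theorem chiShear_one (κ a ε : ℝ) : chiShear κ a ε 1 = fun _ => 0 :=
  rfl

theorem differentiable_streamProfile (a ε : ℝ) : Differentiable ℝ (streamProfile a ε) := by
  unfold streamProfile
  fun_prop

theorem hasDerivAt_correctorProfile (κ a ε t : ℝ) :
    HasDerivAt (correctorProfile κ a ε) (-(streamProfile a ε t / κ)) t := by
  have hlin : HasDerivAt (fun s : ℝ => 2 * π * s) (2 * π) t := hasDerivAt_const_mul (2 * π)
  refine (hlin.cos.const_mul (a * ε ^ 2 / (2 * π * κ))).congr_deriv ?_
  unfold streamProfile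
  field_simp

theorem periodic_correctorProfile (κ a ε : ℝ) : Function.Periodic (correctorProfile κ a ε) 1 :=
  fun t => by simp [correctorProfile, mul_add]

theorem intervalIntegral_comp_two_pi_mul {E : Type*} [NormedAddCommGroup E] [NormedSpace ℝ E]
    (f : ℝ → E) :
    ∫ t in (0 : ℝ)..1, f (2 * π * t) = (2 * π)⁻¹ • ∫ s in (0 : ℝ)..2 * π, f s := by
  rw [intervalIntegral.integral_comp_mul_left f two_pi_pos.ne', mul_zero, mul_one]

theorem integral_correctorProfile (κ a ε : ℝ) :
    ∫ t in (0 : ℝ)..1, correctorProfile κ a ε t = 0 := by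
  simp [correctorProfile, intervalIntegral_comp_two_pi_mul Real.cos]

theorem integral_streamProfile (a ε : ℝ) : ∫ t in (0 : ℝ)..1, streamProfile a ε t = 0 := by
  simp [streamProfile, intervalIntegral_comp_two_pi_mul Real.sin]

theorem integral_streamProfile_sq (a ε : ℝ) :
    ∫ t in (0 : ℝ)..1, streamProfile a ε t ^ 2 = a ^ 2 * ε ^ 4 / 2 := by
  have hsin : ∫ t in (0 : ℝ)..1, Real.sin (2 * π * t) ^ 2 = 1 / 2 := by
    calc ∫ t in (0 : ℝ)..1, Real.sin (2 * π * t) ^ 2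
      _ = (2 * π)⁻¹ * ∫ s in (0 : ℝ)..2 * π, Real.sin s ^ 2 :=
        intervalIntegral_comp_two_pi_mul fun s => Real.sin s ^ 2
      _ = (2 * π)⁻¹ * π := by simp [integral_sin_sq]
      _ = 1 / 2 := by field_simp
  simp only [streamProfile, mul_pow, intervalIntegral.integral_const_mul, hsin]
  ring

theorem spacePeriodic_chiShear (κ a ε : ℝ) (i : Fin 2) : SpacePeriodic (chiShear κ a ε i) := by
  fin_cases i
  · exact spacePeriodic_comp_eval (periodic_correctorProfile κ a ε) 1
  · exact fun _ _ => rfl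

theorem integral_chiShear (κ a ε : ℝ) (i : Fin 2) : ∫ y in box 2, chiShear κ a ε i y = 0 := by
  fin_cases i
  · have hcont : Continuous (correctorProfile κ a ε) :=
      continuous_iff_continuousAt.2 fun t => (hasDerivAt_correctorProfile κ a ε t).continuousAt
    exact (setIntegral_box_comp_eval hcont.aestronglyMeasurable 1).trans
      (integral_correctorProfile κ a ε)
  · simp [chiShear_one]

variable {κ : ℝ}

theorem divergence_cellFlux_aShear (hκ : κ ≠ 0) (a ε : ℝ) (i : Fin 2) (y : Fin 2 → ℝ) :
    divergence (cellFlux (aShear κ a ε) (chiShear κ a ε i) i) y = 0 := by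
  have hdiff := differentiable_streamProfile a ε (y 1)
  revert i
  rw [Fin.forall_fin_two, aShear_eq_shearMatrix, chiShear_zero, chiShear_one]
  exact ⟨divergence_cellFlux_shearMatrix_zero hκ (hasDerivAt_correctorProfile κ a ε) hdiff,
    divergence_cellFlux_shearMatrix_one κ hdiff⟩

theorem homogenizedColumn_aShear_zero (hκ : κ ≠ 0) (a ε : ℝ) :
    homogenizedColumn (aShear κ a ε) (chiShear κ a ε 0) 0 =
      Pi.single 0 (κ + a ^ 2 * ε ^ 4 / (2 * κ)) := by
  have hcont := (differentiable_streamProfile a ε).continuous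
  rw [aShear_eq_shearMatrix, chiShear_zero, homogenizedColumn_shearMatrix_zero hκ
    (hasDerivAt_correctorProfile κ a ε) (hcont.pow 2).integrableOn_Icc,
    integral_streamProfile_sq, div_div]
  ext k
  fin_cases k <;> simp

theorem homogenizedColumn_aShear_one (κ a ε : ℝ) :
    homogenizedColumn (aShear κ a ε) (chiShear κ a ε 1) 1 = Pi.single 1 κ := by
  have hcont := (differentiable_streamProfile a ε).continuous
  rw [aShear_eq_shearMatrix, chiShear_one,
    homogenizedColumn_shearMatrix_one κ hcont.aestronglyMeasurable, integral_streamProfile]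
  ext k
  fin_cases k <;> simp

end SinusoidalShear

/-- **Explicit corrector and the Taylor diffusion formula for a shear flow.**
For `κ, a, ε > 0` and `𝐚(y) = κI₂ + aε² sin(2πy₂) I₂^⊥`, the functions
`χ₁(y) = (aε²/(2πκ)) cos(2πy₂)` and `χ₂ = 0` are ℤ²-periodic, have zero mean
over `[0,1]²`, solve the steady cell problem `div(𝐚(e_i + ∇χ_i)) = 0`, and the
homogenized matrix `𝐚̄ e_i = ∫_{[0,1]²} 𝐚(e_i + ∇χ_i)` is the Taylor matrix
`diag(κ + a²ε⁴/(2κ), κ)`. -/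
theorem taylor_diffusion_formula
    (κ a ε : ℝ) (hκ : 0 < κ) (ha : 0 < a) (hε : 0 < ε) :
    (∀ i, SpacePeriodic (chiShear κ a ε i)) ∧
    (∀ i, (∫ y in box 2, chiShear κ a ε i y) = 0) ∧
    (∀ (i : Fin 2) (y : Fin 2 → ℝ),
      ∑ k, pd (fun z => ∑ j, aShear κ a ε z k j *
        ((if j = i then 1 else 0) + pd (chiShear κ a ε i) j z)) k y = 0) ∧
    (∀ k : Fin 2,
      (∫ y in box 2, ∑ j, aShear κ a ε y k j *
          ((if j = (0 : Fin 2) then 1 else 0) + pd (chiShear κ a ε 0) j y))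
        = if k = 0 then κ + a ^ 2 * ε ^ 4 / (2 * κ) else 0) ∧
    (∀ k : Fin 2,
      (∫ y in box 2, ∑ j, aShear κ a ε y k j *
          ((if j = (1 : Fin 2) then 1 else 0) + pd (chiShear κ a ε 1) j y))
        = if k = 1 then κ else 0) := by
  refine ⟨spacePeriodic_chiShear κ a ε, integral_chiShear κ a ε,
    divergence_cellFlux_aShear hκ.ne' a ε, fun k => ?_, fun k => ?_⟩
  · rw [← Pi.single_apply]
    exact congrFun (homogenizedColumn_aShear_zero hκ.ne' a ε) k
  · rw [← Pi.single_apply]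
    exact congrFun (homogenizedColumn_aShear_one κ a ε) k
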